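/- (Final example, rational case) Let p, q ∈ ℕ with 0 < p < q and gcd(p,q) = 1, set a = p/q, K = [−a, 1−a] ⊆ ℝ, and for i = 1,…,q let K_i = [−(p−i+1)/q, −(p−i)/q]. Then K = ⋃_{i=1}^q K_i with the K_i essentially disjoint, for each i there exist ℓ_1, ℓ_2 ∈ ℤ and j_1, j_2 ∈ {1,…,q} with 2·K_i = (K_{j_1} + ℓ_1) ∪ (K_{j_2} + ℓ_2), the collection {K_i}_{i=1}^q is an integral self-affine collection associated with B = 2, and K is an integral self-affine ℤ-tiling set with q prototiles. -/

import Mathlib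

/-!
The pieces `K_i` are consecutive cells of the grid `(ℤ - p) / q`. This grid is invariant under
integer translations, so the translates `K_j + ℓ` are exactly the cells, the cell of index `m`
being obtained from the quotient and remainder of `m` by `q`. The grid is also mapped into itself by
multiplication by `B`, because `B * ((m - p) / q) = ((B * m - (B - 1) * p) - p) / q`, and hence `B`
times a cell, an interval of length `|B| / q` between grid points, is a union of `|B|` cells.
-/

open MeasureTheory Pointwise

namespace ISAMT1

/-- Translation of a subset of `ℝ` by an integer. -/
def tr (c : ℤ) (E : Set ℝ) : Set ℝ := (fun x => (c : ℝ) + x) '' E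

/-- An integral self-affine collection in dimension one, associated with an integer `B`
(`|B| > 1`), with digit sets `Γ i j ⊆ ℤ`.  Equality of measurable sets is understood modulo
Lebesgue-null sets, so the self-affine set equation is stated almost everywhere and the
disjointness condition states that intersections are null. -/
structure IsSelfAffineCollection (B : ℤ) {M : ℕ} (K : Fin M → Set ℝ)
    (Γ : Fin M → Fin M → Finset ℤ) : Prop where
  compact : ∀ i, IsCompact (K i)
  selfaffine : ∀ i, (fun x => (B : ℝ) * x) '' K i =ᵐ[volume] ⋃ j, ⋃ γ ∈ Γ i j, tr γ (K j)
  disj : ∀ k i j : Fin M, ∀ β ∈ Γ k i, ∀ γ ∈ Γ k j, (i ≠ j ∨ β ≠ γ) →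
    volume (tr β (K i) ∩ tr γ (K j)) = 0

/-- The collection `K` ℤ-tiles `ℝ`: its members are pairwise essentially disjoint, and the
ℤ-translates of their union are pairwise essentially disjoint and cover `ℝ` up to a null set. -/
def TilesZ {M : ℕ} (K : Fin M → Set ℝ) : Prop :=
  (∀ i j : Fin M, i ≠ j → volume (K i ∩ K j) = 0) ∧
  (∀ ℓ₁ ℓ₂ : ℤ, ℓ₁ ≠ ℓ₂ → volume (tr ℓ₁ (⋃ i, K i) ∩ tr ℓ₂ (⋃ i, K i)) = 0) ∧
  volume ((Set.univ : Set ℝ) \ ⋃ ℓ : ℤ, tr ℓ (⋃ i, K i)) = 0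

/-- `D` is a complete set of coset representatives of `ℤ/Bℤ`. -/
def CompleteResidues (B : ℤ) (D : Finset ℤ) : Prop :=
  ∀ v : ℤ, ∃! d, d ∈ D ∧ ∃ z : ℤ, v = d + B * z

section MonotonePartition

variable {α : Type*} [LinearOrder α]

lemma biUnion_Ico_Icc_map_succ {f : ℤ → α} (hf : Monotone f) {a b : ℤ} (hab : a < b) :
    ⋃ n ∈ Finset.Ico a b, Set.Icc (f n) (f (n + 1)) = Set.Icc (f a) (f b) := by
  induction b, (hab : a + 1 ≤ b) using Int.leInduction with
  | base =>
    rw [Finset.Ico_add_one_right_eq_Icc, Finset.Icc_self, Finset.set_biUnion_singleton]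
  | succ b hab ih =>
    have hab' : a ≤ b := by lia
    rw [← Finset.insert_Ico_right_eq_Ico_add_one hab', Finset.set_biUnion_insert, ih,
      Set.union_comm, Set.Icc_union_Icc_eq_Icc (hf hab') (hf (by lia))]

open scoped Function in
lemma pairwise_aedisjoint_Icc_map_succ [MeasurableSpace α] {μ : Measure α} [NullSingletonClass μ]
    {f : ℤ → α} (hf : Monotone f) :
    Pairwise (AEDisjoint μ on fun n ↦ Set.Icc (f n) (f (n + 1))) := fun _ _ hmn ↦
  (hf.pairwise_disjoint_on_Ico_succ hmn).aedisjoint.congr Ico_ae_eq_Icc.symm Ico_ae_eq_Icc.symm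

end MonotonePartition

section Translates

variable {M : ℕ} {K : Fin M → Set ℝ}

lemma tr_zero (E : Set ℝ) : tr 0 E = E := by
  simp [tr]

lemma tr_iUnion {ι : Sort*} (c : ℤ) (E : ι → Set ℝ) : tr c (⋃ i, E i) = ⋃ i, tr c (E i) :=
  Set.image_iUnion

lemma iUnion_tr_Icc (a : ℝ) : ⋃ ℓ : ℤ, tr ℓ (Set.Icc a (a + 1)) = Set.univ := by
  simp only [tr, Set.image_const_add_Icc, ← add_assoc, add_comm _ a, iUnion_Icc_add_intCast]

open scoped Function in
lemma IsSelfAffineCollection.of_biUnion_tr {B : ℤ} (hK : ∀ i, IsCompact (K i))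
    {T : Fin M → Finset (ℤ × Fin M)}
    (hT : ∀ i, (fun x ↦ (B : ℝ) * x) '' K i = ⋃ t ∈ T i, tr t.1 (K t.2))
    (hdisj : Pairwise (AEDisjoint volume on fun t : ℤ × Fin M ↦ tr t.1 (K t.2))) :
    IsSelfAffineCollection B K fun i j ↦ {t ∈ T i | t.2 = j}.image Prod.fst where
  compact := hK
  selfaffine i := by
    have hfibre : ⋃ t ∈ T i, tr t.1 (K t.2) =
        ⋃ j, ⋃ γ ∈ {t ∈ T i | t.2 = j}.image Prod.fst, tr γ (K j) := by
      ext x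
      simp only [Set.mem_iUnion, exists_prop, Prod.exists, Finset.mem_image, Finset.mem_filter,
        exists_and_right, ↓existsAndEq, and_true, exists_eq_right]
      tauto
    exact ((hT i).trans hfibre).eventuallyEq
  disj _ i j β _ γ _ hne := hdisj (i := (β, i)) (j := (γ, j)) (by grind)

open scoped Function in
lemma TilesZ.of_pairwise_aedisjoint
    (hdisj : Pairwise (AEDisjoint volume on fun t : ℤ × Fin M ↦ tr t.1 (K t.2)))
    (hcover : ⋃ ℓ : ℤ, tr ℓ (⋃ i, K i) = Set.univ) : TilesZ K := by
  refine ⟨fun i j hij ↦ ?_, fun ℓ₁ ℓ₂ hℓ ↦ ?_, by simp [hcover]⟩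
  · simpa only [Function.onFun, tr_zero, AEDisjoint] using
      hdisj (i := (0, i)) (j := (0, j)) (by simpa using hij)
  · change AEDisjoint volume _ _
    simp only [tr_iUnion, AEDisjoint.iUnion_left_iff, AEDisjoint.iUnion_right_iff]
    exact fun j i ↦ hdisj (i := (ℓ₁, i)) (j := (ℓ₂, j)) (by simp [hℓ])

end Translates

section Grid

variable {p : ℤ} {q : ℕ}

/-- The point of index `m` in the grid of step `1 / q` whose point of index `p` is the origin. -/
noncomputable def gridPoint (p : ℤ) (q : ℕ) (m : ℤ) : ℝ := ((m : ℝ) - p) / q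

/-- The closed interval between the consecutive grid points of indices `m` and `m + 1`. For
`0 ≤ m < q` it is the prototile `K_{m+1}`, which the theorem indexes by `Fin q`. -/
def cell (p : ℤ) (q : ℕ) (m : ℤ) : Set ℝ := Set.Icc (gridPoint p q m) (gridPoint p q (m + 1))

/-- The indices of the cells that make up `B · cell p q m`, see `image_mul_cell`. The minimum and
maximum account for the reversal of orientation when `B < 0`. -/
noncomputable def dilatedIndices (B p m : ℤ) : Finset ℤ :=
  Finset.Ico (min (B * m - (B - 1) * p) (B * (m + 1) - (B - 1) * p))
    (max (B * m - (B - 1) * p) (B * (m + 1) - (B - 1) * p))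

lemma monotone_gridPoint (p : ℤ) (q : ℕ) : Monotone (gridPoint p q) := fun m n hmn ↦ by
  unfold gridPoint
  gcongr

lemma mul_gridPoint (B m : ℤ) :
    B * gridPoint p q m = gridPoint p q (B * m - (B - 1) * p) := by
  simp only [gridPoint]
  push_cast
  ring

lemma add_gridPoint [NeZero q] (c m : ℤ) :
    c + gridPoint p q m = gridPoint p q (c * q + m) := by
  have hq : (q : ℝ) ≠ 0 := NeZero.ne _
  simp only [gridPoint]
  push_cast
  field_simp
  ring

lemma tr_cell [NeZero q] (c m : ℤ) : tr c (cell p q m) = cell p q (c * q + m) := by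
  simp only [tr, cell, Set.image_const_add_Icc, add_gridPoint, add_assoc]

lemma image_mul_cell {B : ℤ} (hB : B ≠ 0) (m : ℤ) :
    (fun x ↦ (B : ℝ) * x) '' cell p q m = ⋃ n ∈ dilatedIndices B p m, cell p q n := by
  have hne : B * m - (B - 1) * p ≠ B * (m + 1) - (B - 1) * p := by grind
  have hmono := monotone_gridPoint p q
  simp only [cell, dilatedIndices]
  rw [biUnion_Ico_Icc_map_succ hmono (min_lt_max.2 hne), hmono.map_min, hmono.map_max,
    ← Set.uIcc_of_le (hmono (by lia : m ≤ m + 1)), Set.image_const_mul_uIcc,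
    mul_gridPoint, mul_gridPoint, Set.uIcc]

lemma card_dilatedIndices (B p m : ℤ) : (dilatedIndices B p m).card = B.natAbs := by
  simp only [dilatedIndices, Int.card_Ico, mul_add]
  lia

lemma iUnion_cell [NeZero q] :
    ⋃ i : Fin q, cell p q i = Set.Icc (-((p : ℝ) / q)) (1 - (p : ℝ) / q) := by
  have hq : (q : ℝ) ≠ 0 := NeZero.ne _
  have hreindex : ⋃ i : Fin q, cell p q i = ⋃ n ∈ Finset.Ico (0 : ℤ) q, cell p q n := by
    ext x
    simp only [Set.mem_iUnion, Finset.mem_Ico, exists_prop]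
    exact ⟨fun ⟨i, hx⟩ ↦ ⟨i, by grind, hx⟩,
      fun ⟨n, hn, hx⟩ ↦ ⟨⟨n.toNat, by lia⟩, by simpa [hn.1] using hx⟩⟩
  have hpos : (0 : ℤ) < q := mod_cast NeZero.pos q
  rw [hreindex]
  simp only [cell]
  rw [biUnion_Ico_Icc_map_succ (monotone_gridPoint p q) hpos]
  simp [gridPoint, sub_div, neg_div, hq]

lemma tr_cell_eq_cell_divModEquiv_symm [NeZero q] (t : ℤ × Fin q) :
    tr t.1 (cell p q t.2) = cell p q ((Int.divModEquiv q).symm t) :=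
  tr_cell _ _

open scoped Function in
lemma pairwise_aedisjoint_tr_cell [NeZero q] :
    Pairwise (AEDisjoint volume on fun t : ℤ × Fin q ↦ tr t.1 (cell p q t.2)) := by
  simp only [tr_cell_eq_cell_divModEquiv_symm]
  exact (pairwise_aedisjoint_Icc_map_succ (monotone_gridPoint p q)).comp_of_injective
    (Int.divModEquiv q).symm.injective

lemma biUnion_cell_eq_biUnion_tr [NeZero q] (S : Finset ℤ) :
    ⋃ n ∈ S, cell p q n =
      ⋃ t ∈ S.map (Int.divModEquiv q).toEmbedding, tr t.1 (cell p q t.2) := by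
  simp only [tr_cell_eq_cell_divModEquiv_symm, Finset.mem_map_equiv]
  exact ((Int.divModEquiv q).symm.surjective.iUnion_comp fun n ↦ ⋃ _ : n ∈ S, cell p q n).symm

end Grid

theorem example_rational_case_general
    (B : ℤ) (hB : B ≠ 0) (p : ℤ) (q : ℕ) (hq : 0 < q)
    (Kc : Fin q → Set ℝ)
    (hKc : ∀ i : Fin q, Kc i = Set.Icc (((i : ℝ) - p) / q) (((i : ℝ) + 1 - p) / q)) :
    (⋃ i, Kc i) = Set.Icc (-((p : ℝ) / q)) (1 - (p : ℝ) / q) ∧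
    (∀ i j : Fin q, i ≠ j → volume (Kc i ∩ Kc j) = 0) ∧
    (∀ i : Fin q, ∃ T : Finset (ℤ × Fin q), T.card = B.natAbs ∧
      (fun x ↦ (B : ℝ) * x) '' Kc i = ⋃ t ∈ T, tr t.1 (Kc t.2)) ∧
    (∃ Γ : Fin q → Fin q → Finset ℤ, IsSelfAffineCollection B Kc Γ) ∧
    TilesZ Kc := by
  have : NeZero q := ⟨hq.ne'⟩
  obtain rfl : Kc = fun i : Fin q ↦ cell p q i := by
    ext1 i
    simp [hKc, cell, gridPoint]
  let T (i : Fin q) := (dilatedIndices B p i).map (Int.divModEquiv q).toEmbedding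
  have hT (i : Fin q) :
      (fun x ↦ (B : ℝ) * x) '' cell p q i = ⋃ t ∈ T i, tr t.1 (cell p q t.2) :=
    (image_mul_cell hB i).trans (biUnion_cell_eq_biUnion_tr _)
  have htiles : TilesZ fun i : Fin q ↦ cell p q i := by
    refine .of_pairwise_aedisjoint pairwise_aedisjoint_tr_cell ?_
    rw [iUnion_cell, sub_eq_neg_add, iUnion_tr_Icc]
  exact ⟨iUnion_cell, htiles.1,
    fun i ↦ ⟨T i, (Finset.card_map _).trans (card_dilatedIndices B p i), hT i⟩,
    ⟨_, .of_biUnion_tr (fun _ ↦ isCompact_Icc) hT pairwise_aedisjoint_tr_cell⟩, htiles⟩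

/-- final example, rational case: for `a = p/q` with `0 < p < q`,
`gcd(p,q) = 1`, the set `K = [−a, 1−a]` cut into the `q` pieces
`K_i = [−(p−i+1)/q, −(p−i)/q]` (here indexed by `i : Fin q`, the piece
`[(i−p)/q, (i+1−p)/q]`) is an integral self-affine ℤ-tiling set with `q` prototiles for
`B = 2`, and each `2·K_i` is the union of two integer translates of prototiles. -/
theorem example_rational_case
    (p q : ℕ) (hp : 0 < p) (hpq : p < q) (hco : Nat.Coprime p q)
    (Kc : Fin q → Set ℝ)
    (hKc : ∀ i : Fin q, Kc i = Set.Icc (((i : ℝ) - p) / q) (((i : ℝ) + 1 - p) / q)) :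
    (⋃ i, Kc i) = Set.Icc (-((p : ℝ) / q)) (1 - (p : ℝ) / q) ∧
    (∀ i j : Fin q, i ≠ j → volume (Kc i ∩ Kc j) = 0) ∧
    (∀ i : Fin q, ∃ (ℓ₁ ℓ₂ : ℤ) (j₁ j₂ : Fin q),
      (fun x => (2 : ℝ) * x) '' Kc i = tr ℓ₁ (Kc j₁) ∪ tr ℓ₂ (Kc j₂)) ∧
    (∃ Γ : Fin q → Fin q → Finset ℤ, IsSelfAffineCollection 2 Kc Γ) ∧
    TilesZ Kc := by
  obtain ⟨hunion, hdisj, hdilate, hself, htiles⟩ :=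
    example_rational_case_general 2 two_ne_zero p q (hp.trans hpq) Kc
      (by simpa only [Int.cast_natCast] using hKc)
  refine ⟨by simpa only [Int.cast_natCast] using hunion, hdisj, fun i ↦ ?_, hself, htiles⟩
  obtain ⟨T, hcard, hT⟩ := hdilate i
  obtain ⟨⟨ℓ₁, j₁⟩, ⟨ℓ₂, j₂⟩, -, rfl⟩ := Finset.card_eq_two.1 hcard
  exact ⟨ℓ₁, ℓ₂, j₁, j₂, by simpa using hT⟩

end ISAMT1
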